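/- arXiv:1803.08304 — 6 statements merged into one kernel-verified Lean document; each statement's English description precedes it below -/
import Mathlib

section
/- Let A and B be two finite persistence barcodes and 1 ≤ p ≤ ∞. Let π(A) = {[0, ℓ_i^a]}_{i=1}^{n_a} and π(B) = {[0, ℓ_i^b]}_{i=1}^{n_b} be the barcodes obtained by translating every interval to start at the origin. Then d_p(π(A), π(B)) ≤ 2 · d_p(A, B). -/
open Finset

/-- A finite persistence barcode with `n` intervals is given by endpoint functions
`x y : Fin n → ℝ` with `x i ≤ y i` (zero-length intervals serve as padding).
`pcost` is the cost of matching interval `i` of `(xa, ya)` with interval `γ i` of `(xb, yb)`. -/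
noncomputable def pcost {n : ℕ} (xa ya xb yb : Fin n → ℝ) (γ : Equiv.Perm (Fin n)) (i : Fin n) : ℝ :=
  max |xa i - xb (γ i)| |ya i - yb (γ i)|

/-- `p`-th Wasserstein distance between barcodes with `n` intervals each:
`d_p(A,B) = min_γ (Σ_i max{|x_i^a − x_{γ(i)}^b|, |y_i^a − y_{γ(i)}^b|}^p)^(1/p)`. -/
noncomputable def dW {n : ℕ} (p : ℝ) (xa ya xb yb : Fin n → ℝ) : ℝ :=
  (Finset.univ : Finset (Equiv.Perm (Fin n))).inf' Finset.univ_nonempty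
    (fun γ => (∑ i, (pcost xa ya xb yb γ i) ^ p) ^ (1 / p))

/-- Bottleneck distance `d_∞(A,B) = min_γ max_i max{|x_i^a − x_{γ(i)}^b|, |y_i^a − y_{γ(i)}^b|}`. -/
noncomputable def dInf {n : ℕ} (xa ya xb yb : Fin n → ℝ) : ℝ :=
  (Finset.univ : Finset (Equiv.Perm (Fin n))).inf' Finset.univ_nonempty
    (fun γ => ⨆ i, pcost xa ya xb yb γ i)

/-- Translating both intervals to the origin at most doubles the cost of a matched pair. -/
theorem pcost_proj_le {n : ℕ} (xa ya xb yb : Fin n → ℝ) (γ : Equiv.Perm (Fin n)) (i : Fin n) :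
    pcost (fun _ => (0 : ℝ)) (fun i => ya i - xa i) (fun _ => (0 : ℝ)) (fun i => yb i - xb i) γ i ≤
      2 * pcost xa ya xb yb γ i := by
  unfold pcost
  have h1 := le_max_left |xa i - xb (γ i)| |ya i - yb (γ i)|
  have h2 := le_max_right |xa i - xb (γ i)| |ya i - yb (γ i)|
  have h3 := abs_nonneg (xa i - xb (γ i))
  have h4 := abs_le.1 h1
  have h5 := abs_le.1 h2
  refine max_le ?_ ?_
  · simp only [sub_self, abs_zero]
    linarith
  · rw [abs_le]
    constructor <;> linarith [h4.1, h4.2, h5.1, h5.2]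

theorem pcost_nonneg {n : ℕ} (xa ya xb yb : Fin n → ℝ) (γ : Equiv.Perm (Fin n)) (i : Fin n) :
    0 ≤ pcost xa ya xb yb γ i :=
  le_max_of_le_left (abs_nonneg _)

/-- for the projection `π(A) = {[0, ℓ_i^a]}` translating every interval to
start at the origin, `d_p(π(A), π(B)) ≤ 2·d_p(A,B)` for all `1 ≤ p ≤ ∞`. -/
theorem projection_pi_inequality {n : ℕ} (xa ya xb yb : Fin n → ℝ)
    (hA : ∀ i, xa i ≤ ya i) (hB : ∀ i, xb i ≤ yb i) :
    (∀ p : ℝ, 1 ≤ p →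
      dW p (fun _ => (0 : ℝ)) (fun i => ya i - xa i) (fun _ => (0 : ℝ)) (fun i => yb i - xb i) ≤
        2 * dW p xa ya xb yb) ∧
    dInf (fun _ => (0 : ℝ)) (fun i => ya i - xa i) (fun _ => (0 : ℝ)) (fun i => yb i - xb i) ≤
      2 * dInf xa ya xb yb := by
  refine ⟨fun p hp => ?_, ?_⟩
  · have hp0 : 0 < p := by linarith
    obtain ⟨γ, -, hγ⟩ := Finset.exists_mem_eq_inf' (Finset.univ_nonempty)
      (fun γ : Equiv.Perm (Fin n) => (∑ i, (pcost xa ya xb yb γ i) ^ p) ^ (1 / p))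
    unfold dW
    rw [hγ]
    refine (Finset.inf'_le _ (Finset.mem_univ γ)).trans ?_
    have hS : 0 ≤ ∑ i, (pcost xa ya xb yb γ i) ^ p :=
      Finset.sum_nonneg fun i _ => Real.rpow_nonneg (pcost_nonneg ..) _
    have h2 : (2 : ℝ) * (∑ i, (pcost xa ya xb yb γ i) ^ p) ^ (1 / p) =
        (∑ i, (2 * pcost xa ya xb yb γ i) ^ p) ^ (1 / p) := by
      have h3 : ∑ i, (2 * pcost xa ya xb yb γ i) ^ p =
          2 ^ p * ∑ i, (pcost xa ya xb yb γ i) ^ p := by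
        rw [Finset.mul_sum]
        exact Finset.sum_congr rfl fun i _ =>
          Real.mul_rpow (by norm_num) (pcost_nonneg ..)
      rw [h3, Real.mul_rpow (by positivity) hS, ← Real.rpow_mul (by norm_num),
        mul_one_div_cancel hp0.ne', Real.rpow_one]
    rw [h2]
    refine Real.rpow_le_rpow
      (Finset.sum_nonneg fun i _ => Real.rpow_nonneg (pcost_nonneg ..) _)
      (Finset.sum_le_sum fun i _ => ?_) (by positivity)
    exact Real.rpow_le_rpow (pcost_nonneg ..) (pcost_proj_le ..) hp0.le
  · obtain ⟨γ, -, hγ⟩ := Finset.exists_mem_eq_inf' (Finset.univ_nonempty)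
      (fun γ : Equiv.Perm (Fin n) => ⨆ i, pcost xa ya xb yb γ i)
    unfold dInf
    rw [hγ]
    refine (Finset.inf'_le _ (Finset.mem_univ γ)).trans ?_
    refine Real.iSup_le (fun i => (pcost_proj_le ..).trans ?_)
      (mul_nonneg (by norm_num) (Real.iSup_nonneg fun i => pcost_nonneg ..))
    exact mul_le_mul_of_nonneg_left
      (le_ciSup (f := fun i => pcost xa ya xb yb γ i) (Set.finite_range _).bddAbove i)
      (by norm_num)
end

section
/- Let A and B be two persistence barcodes, each having the same number m_∞ ≥ 1 of infinite intervals (intervals of the form [x, ∞)) and finitely many finite intervals. Fix C ≥ 0 and let τ replace each infinite interval [x, ∞) of a barcode by [x, u + C], where u is the maximum endpoint of the finite intervals of that barcode. Then for every 1 ≤ p < ∞, d_p(τ(A), τ(B)) ≤ ( d_p(A,B)^p + m_∞ · d_∞(A,B)^p )^{1/p}. -/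
open Finset

/-- A barcode possibly containing infinite intervals is modelled by endpoints
`x y : Fin n → ℝ` together with a set `I` of indices of infinite intervals `[x_i, ∞)`
(the value `y i` is irrelevant for `i ∈ I`).  By the convention `|∞ − ∞| = 0`, the
bijections achieving a finite distance are exactly those matching infinite intervals
with infinite intervals; `icost` is the resulting matching cost. -/
noncomputable def icost {n : ℕ} (xa ya xb yb : Fin n → ℝ) (Ia : Finset (Fin n))
    (γ : Equiv.Perm (Fin n)) (i : Fin n) : ℝ :=
  max |xa i - xb (γ i)| (if i ∈ Ia then 0 else |ya i - yb (γ i)|)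

/-- `p`-th Wasserstein distance (`1 ≤ p < ∞`) between barcodes with infinite intervals:
the minimum is taken over bijections matching infinite intervals with infinite ones. -/
noncomputable def dWi {n : ℕ} (p : ℝ) (xa ya xb yb : Fin n → ℝ)
    (Ia Ib : Finset (Fin n)) : ℝ :=
  sInf { r : ℝ | ∃ γ : Equiv.Perm (Fin n), (∀ i, i ∈ Ia ↔ γ i ∈ Ib) ∧
    r = (∑ i, (icost xa ya xb yb Ia γ i) ^ p) ^ (1 / p) }

/-- Bottleneck distance between barcodes with infinite intervals. -/
noncomputable def dInfi {n : ℕ} (xa ya xb yb : Fin n → ℝ) (Ia Ib : Finset (Fin n)) : ℝ :=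
  sInf { r : ℝ | ∃ γ : Equiv.Perm (Fin n), (∀ i, i ∈ Ia ↔ γ i ∈ Ib) ∧
    r = ⨆ i, icost xa ya xb yb Ia γ i }

/-- `u`, the maximum right endpoint of the finite intervals of the barcode. -/
noncomputable def uMax {n : ℕ} (y : Fin n → ℝ) (I : Finset (Fin n)) : ℝ :=
  sSup { r : ℝ | ∃ i, i ∉ I ∧ r = y i }

lemma uMax_le_add {n : ℕ} (ya yb : Fin n → ℝ) (Ia Ib : Finset (Fin n)) (D : ℝ)
    (hfinA : ∃ i, i ∉ Ia) (h : ∀ i, i ∉ Ia → ∃ j, j ∉ Ib ∧ ya i ≤ yb j + D) :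
    uMax ya Ia ≤ uMax yb Ib + D := by
  unfold uMax
  apply csSup_le
  · obtain ⟨i, hi⟩ := hfinA
    exact ⟨ya i, i, hi, rfl⟩
  · rintro r ⟨i, hi, rfl⟩
    obtain ⟨j, hj, hij⟩ := h i hi
    have hb : BddAbove { r : ℝ | ∃ i, i ∉ Ib ∧ r = yb i } := by
      apply (Set.finite_range yb).bddAbove.mono
      rintro r ⟨i, _, rfl⟩
      exact ⟨i, rfl⟩
    have := le_csSup hb ⟨j, hj, rfl⟩
    linarith

lemma sInf_attained {n : ℕ} (Ia Ib : Finset (Fin n)) (hcard : Ia.card = Ib.card)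
    (f : Equiv.Perm (Fin n) → ℝ) :
    ∃ γ : Equiv.Perm (Fin n), (∀ i, i ∈ Ia ↔ γ i ∈ Ib) ∧
      sInf { r : ℝ | ∃ γ : Equiv.Perm (Fin n), (∀ i, i ∈ Ia ↔ γ i ∈ Ib) ∧ r = f γ } = f γ := by
  have hne : { r : ℝ | ∃ γ : Equiv.Perm (Fin n), (∀ i, i ∈ Ia ↔ γ i ∈ Ib) ∧ r = f γ }.Nonempty := by
    let e : {x // x ∈ Ia} ≃ {x // x ∈ Ib} := Finset.equivOfCardEq hcard
    refine ⟨_, e.extendSubtype, fun i => ⟨fun hi => e.extendSubtype_mem i hi, fun hi => ?_⟩, rfl⟩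
    by_contra h
    exact e.extendSubtype_not_mem i h hi
  have hfin : { r : ℝ | ∃ γ : Equiv.Perm (Fin n), (∀ i, i ∈ Ia ↔ γ i ∈ Ib) ∧ r = f γ }.Finite := by
    apply (Set.finite_range f).subset
    rintro r ⟨γ, _, rfl⟩
    exact ⟨γ, rfl⟩
  exact hne.csInf_mem hfin

/-- if `A`, `B` have the same number `m_∞ ≥ 1` of infinite intervals and the
projection `τ` replaces each infinite interval `[x,∞)` by `[x, u + C]` (with `u` the maximum
endpoint of the finite intervals of that barcode, `C ≥ 0`), then for `1 ≤ p < ∞`,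
`d_p(τ(A), τ(B)) ≤ (d_p(A,B)^p + m_∞·d_∞(A,B)^p)^(1/p)`. -/
theorem projection_tau_inequality {n : ℕ} (p C : ℝ) (hp : 1 ≤ p) (hC : 0 ≤ C)
    (xa ya xb yb : Fin n → ℝ) (Ia Ib : Finset (Fin n))
    (hcard : Ia.card = Ib.card) (hm : 1 ≤ Ia.card)
    (hfinA : ∃ i, i ∉ Ia) (hfinB : ∃ i, i ∉ Ib)
    (hA : ∀ i ∉ Ia, xa i ≤ ya i) (hB : ∀ i ∉ Ib, xb i ≤ yb i) :
    dW p xa (fun i => if i ∈ Ia then uMax ya Ia + C else ya i)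
        xb (fun i => if i ∈ Ib then uMax yb Ib + C else yb i) ≤
      (dWi p xa ya xb yb Ia Ib ^ p + (Ia.card : ℝ) * dInfi xa ya xb yb Ia Ib ^ p) ^ (1 / p) := by
  have hp0 : 0 < p := by linarith
  obtain ⟨γ, hγ, hγe⟩ := sInf_attained Ia Ib hcard
    (fun γ => (∑ i, (icost xa ya xb yb Ia γ i) ^ p) ^ (1 / p))
  obtain ⟨δ, hδ, hδe⟩ := sInf_attained Ia Ib hcard (fun γ => ⨆ i, icost xa ya xb yb Ia γ i)
  change dWi p xa ya xb yb Ia Ib = _ at hγe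
  change dInfi xa ya xb yb Ia Ib = _ at hδe
  set D := dInfi xa ya xb yb Ia Ib with hD
  have hle : ∀ i, icost xa ya xb yb Ia δ i ≤ D := by
    intro i
    rw [hδe]
    exact le_ciSup (Set.finite_range (fun i => icost xa ya xb yb Ia δ i)).bddAbove i
  have hc0 : ∀ γ i, 0 ≤ icost xa ya xb yb Ia γ i := fun γ i =>
    le_trans (abs_nonneg _) (le_max_left _ _)
  have hD0 : 0 ≤ D := by
    obtain ⟨i, _⟩ := hfinA
    exact (hc0 δ i).trans (hle i)
  have hy : ∀ i, i ∉ Ia → |ya i - yb (δ i)| ≤ D := by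
    intro i hi
    refine le_trans ?_ (hle i)
    unfold icost
    rw [if_neg hi]
    exact le_max_right _ _
  have h1 : uMax ya Ia ≤ uMax yb Ib + D := by
    refine uMax_le_add _ _ _ _ _ hfinA (fun i hi => ⟨δ i, fun h => hi ((hδ i).2 h), ?_⟩)
    have := (abs_le.1 (hy i hi)).2
    linarith
  have h2 : uMax yb Ib ≤ uMax ya Ia + D := by
    refine uMax_le_add _ _ _ _ _ hfinB (fun j hj => ?_)
    have hi : δ.symm j ∉ Ia := fun h => hj (by simpa using (hδ _).1 h)
    refine ⟨δ.symm j, hi, ?_⟩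
    have := (abs_le.1 (hy _ hi)).1
    rw [Equiv.apply_symm_apply] at this
    linarith
  have hu : |uMax ya Ia - uMax yb Ib| ≤ D := abs_le.2 ⟨by linarith, by linarith⟩
  have hS0 : 0 ≤ ∑ i, (icost xa ya xb yb Ia γ i) ^ p :=
    Finset.sum_nonneg fun i _ => Real.rpow_nonneg (hc0 γ i) p
  have hWp : dWi p xa ya xb yb Ia Ib ^ p = ∑ i, (icost xa ya xb yb Ia γ i) ^ p := by
    rw [hγe, ← Real.rpow_mul hS0, one_div_mul_cancel hp0.ne', Real.rpow_one]
  rw [hWp]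
  unfold dW
  refine (Finset.inf'_le _ (Finset.mem_univ γ)).trans ?_
  have hq0 : ∀ i, 0 ≤ pcost xa (fun i => if i ∈ Ia then uMax ya Ia + C else ya i)
        xb (fun i => if i ∈ Ib then uMax yb Ib + C else yb i) γ i := fun i =>
    le_trans (abs_nonneg _) (le_max_left _ _)
  apply Real.rpow_le_rpow (Finset.sum_nonneg fun i _ => Real.rpow_nonneg (hq0 i) p) _
    (by positivity)
  have hsum : (Ia.card : ℝ) * D ^ p = ∑ i, if i ∈ Ia then D ^ p else 0 := by
    simp
  rw [hsum, ← Finset.sum_add_distrib]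
  refine Finset.sum_le_sum fun i _ => ?_
  by_cases hi : i ∈ Ia
  · have hi' := (hγ i).1 hi
    simp only [pcost, icost, hi, hi', if_true, add_sub_add_right_eq_sub]
    rw [max_eq_left (abs_nonneg (xa i - xb (γ i)))]
    have hx := Real.rpow_nonneg (abs_nonneg (xa i - xb (γ i))) p
    have hDp := Real.rpow_nonneg hD0 p
    rcases max_cases |xa i - xb (γ i)| |uMax ya Ia - uMax yb Ib| with h | h
    · rw [h.1]; linarith
    · rw [h.1]
      have := Real.rpow_le_rpow (abs_nonneg _) hu hp0.le
      linarith
  · have hi' : γ i ∉ Ib := fun h => hi ((hγ i).2 h)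
    simp [pcost, icost, hi, hi']
end

section
/- Fix 1 ≤ p ≤ ∞ and a constant C ∈ ℝ. Let A and B be two persistence barcodes (each a finite multiset of intervals, possibly containing infinite intervals [x, ∞)), and let φ replace every infinite interval [x, ∞) by [x, C], leaving finite intervals unchanged. Then d_p(φ(A), φ(B)) ≤ d_p(A, B). -/
open Finset

theorem exists_compat_perm {n : ℕ} (Ia Ib : Finset (Fin n)) (hcard : Ia.card = Ib.card) :
    ∃ γ : Equiv.Perm (Fin n), ∀ i, i ∈ Ia ↔ γ i ∈ Ib := by
  let e : {x // x ∈ Ia} ≃ {x // x ∈ Ib} := Finset.equivOfCardEq hcard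
  refine ⟨e.extendSubtype, fun i => ⟨fun h => e.extendSubtype_mem i h, fun h => ?_⟩⟩
  by_contra hi
  exact e.extendSubtype_not_mem i hi h

theorem pcost_eq_icost {n : ℕ} (C : ℝ) (xa ya xb yb : Fin n → ℝ) (Ia Ib : Finset (Fin n))
    (γ : Equiv.Perm (Fin n)) (hγ : ∀ i, i ∈ Ia ↔ γ i ∈ Ib) (i : Fin n) :
    pcost xa (fun i => if i ∈ Ia then C else ya i)
      xb (fun i => if i ∈ Ib then C else yb i) γ i = icost xa ya xb yb Ia γ i := by
  unfold pcost icost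
  by_cases h : i ∈ Ia
  · have h2 := (hγ i).1 h
    simp [h, h2]
  · have h2 : γ i ∉ Ib := fun h3 => h ((hγ i).2 h3)
    simp [h, h2]

/-- the projection `φ` replacing every infinite interval `[x,∞)` by `[x,C]`
(and leaving finite intervals unchanged) does not increase the distance:
`d_p(φ(A), φ(B)) ≤ d_p(A,B)` for every `1 ≤ p ≤ ∞`.  (Both barcodes are assumed to have
the same number of infinite intervals, so that `d_p(A,B)` is finite.) -/
theorem projection_phi_inequality {n : ℕ} (C : ℝ)
    (xa ya xb yb : Fin n → ℝ) (Ia Ib : Finset (Fin n))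
    (hcard : Ia.card = Ib.card)
    (hA : ∀ i ∉ Ia, xa i ≤ ya i) (hB : ∀ i ∉ Ib, xb i ≤ yb i) :
    (∀ p : ℝ, 1 ≤ p →
      dW p xa (fun i => if i ∈ Ia then C else ya i)
          xb (fun i => if i ∈ Ib then C else yb i) ≤ dWi p xa ya xb yb Ia Ib) ∧
    dInf xa (fun i => if i ∈ Ia then C else ya i)
        xb (fun i => if i ∈ Ib then C else yb i) ≤ dInfi xa ya xb yb Ia Ib := by
  obtain ⟨γ₀, hγ₀⟩ := exists_compat_perm Ia Ib hcard
  constructor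
  · intro p _
    refine le_csInf ⟨_, γ₀, hγ₀, rfl⟩ ?_
    rintro r ⟨γ, hγ, rfl⟩
    refine (Finset.inf'_le _ (Finset.mem_univ γ)).trans (le_of_eq ?_)
    simp only [pcost_eq_icost C xa ya xb yb Ia Ib γ hγ]
  · refine le_csInf ⟨_, γ₀, hγ₀, rfl⟩ ?_
    rintro r ⟨γ, hγ, rfl⟩
    refine (Finset.inf'_le _ (Finset.mem_univ γ)).trans (le_of_eq ?_)
    simp only [pcost_eq_icost C xa ya xb yb Ia Ib γ hγ]
end

section
/- Fix 1 ≤ p ≤ ∞, a natural number n ≥ 1 and a constant L_min > 0. Persistent entropy is continuous with respect to d_p on the set of finite persistence barcodes with at most n intervals and total length at least L_min: for every such barcode A and every ε > 0 there exists δ > 0 such that every barcode B in this set with d_p(A, B) ≤ δ satisfies |E(A) − E(B)| ≤ ε. -/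
open Finset

/-- Total length `L_a = Σ_i (y_i − x_i)` of a barcode. -/
noncomputable def lenSum {n : ℕ} (x y : Fin n → ℝ) : ℝ := ∑ i, (y i - x i)

/-- Persistent entropy `E(A) = −Σ_i (ℓ_i/L) log(ℓ_i/L)` (note `Real.log 0 = 0`,
which realizes the convention `0·log 0 = 0`). -/
noncomputable def pentropy {n : ℕ} (x y : Fin n → ℝ) : ℝ :=
  -∑ i, ((y i - x i) / lenSum x y) * Real.log ((y i - x i) / lenSum x y)

theorem pent_core {n : ℕ} (xa ya : Fin n → ℝ) (hL : 0 < lenSum xa ya) (ε : ℝ) (hε : 0 < ε) :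
    ∃ δ : ℝ, 0 < δ ∧ ∀ xb yb : Fin n → ℝ, ∀ γ : Equiv.Perm (Fin n),
      (∀ i, pcost xa ya xb yb γ i ≤ δ) → |pentropy xa ya - pentropy xb yb| ≤ ε := by
  have hc : ContinuousAt (fun z : (Fin n → ℝ) × (Fin n → ℝ) => pentropy z.1 z.2) (xa, ya) := by
    have hl : ContinuousAt (fun z : (Fin n → ℝ) × (Fin n → ℝ) => lenSum z.1 z.2) (xa, ya) := by
      unfold lenSum
      fun_prop
    unfold pentropy
    apply ContinuousAt.neg
    apply tendsto_finsetSum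
    intro i _
    have hd : ContinuousAt (fun z : (Fin n → ℝ) × (Fin n → ℝ) =>
        (z.2 i - z.1 i) / lenSum z.1 z.2) (xa, ya) :=
      ContinuousAt.div (by fun_prop) hl hL.ne'
    exact ContinuousAt.comp (g := fun t : ℝ => t * Real.log t)
      Real.continuous_mul_log.continuousAt hd
  obtain ⟨δ, hδ, h⟩ := Metric.continuousAt_iff.1 hc ε hε
  refine ⟨δ / 2, half_pos hδ, fun xb yb γ hγ => ?_⟩
  have hlen : lenSum (xb ∘ γ) (yb ∘ γ) = lenSum xb yb :=
    Equiv.sum_comp γ (fun i => yb i - xb i)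
  have hE : pentropy (xb ∘ γ) (yb ∘ γ) = pentropy xb yb := by
    unfold pentropy
    rw [hlen]
    congr 1
    exact Equiv.sum_comp γ
      (fun i => ((yb i - xb i) / lenSum xb yb) * Real.log ((yb i - xb i) / lenSum xb yb))
  have hd : dist ((xb ∘ γ, yb ∘ γ) : (Fin n → ℝ) × (Fin n → ℝ)) (xa, ya) < δ := by
    rw [dist_comm, Prod.dist_eq]
    refine lt_of_le_of_lt (max_le ?_ ?_) (half_lt_self hδ)
    · refine (dist_pi_le_iff (half_pos hδ).le).2 fun i => ?_
      exact (le_max_left _ _).trans (hγ i)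
    · refine (dist_pi_le_iff (half_pos hδ).le).2 fun i => ?_
      exact (le_max_right _ _).trans (hγ i)
  have := h hd
  simp only [hE] at this
  rw [dist_comm, Real.dist_eq] at this
  exact this.le

/-- persistent entropy is continuous with respect to `d_p` (`1 ≤ p ≤ ∞`) on the
set of barcodes with at most `n` intervals (modelled as `n` intervals, allowing zero-length
padding) and total length at least `L_min > 0`. -/
theorem pentropy_continuous {n : ℕ} (hn : 1 ≤ n) (Lmin : ℝ) (hLmin : 0 < Lmin) :
    (∀ p : ℝ, 1 ≤ p →
      ∀ xa ya : Fin n → ℝ, (∀ i, xa i ≤ ya i) → Lmin ≤ lenSum xa ya →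
        ∀ ε : ℝ, 0 < ε → ∃ δ : ℝ, 0 < δ ∧
          ∀ xb yb : Fin n → ℝ, (∀ i, xb i ≤ yb i) → Lmin ≤ lenSum xb yb →
            dW p xa ya xb yb ≤ δ → |pentropy xa ya - pentropy xb yb| ≤ ε) ∧
    (∀ xa ya : Fin n → ℝ, (∀ i, xa i ≤ ya i) → Lmin ≤ lenSum xa ya →
      ∀ ε : ℝ, 0 < ε → ∃ δ : ℝ, 0 < δ ∧
        ∀ xb yb : Fin n → ℝ, (∀ i, xb i ≤ yb i) → Lmin ≤ lenSum xb yb →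
          dInf xa ya xb yb ≤ δ → |pentropy xa ya - pentropy xb yb| ≤ ε) := by
  constructor
  · intro p hp xa ya _ hLa ε hε
    obtain ⟨δ, hδ, h⟩ := pent_core xa ya (hLmin.trans_le hLa) ε hε
    refine ⟨δ, hδ, fun xb yb _ _ hd => ?_⟩
    obtain ⟨γ, -, hγ⟩ := (Finset.inf'_le_iff _).1 hd
    refine h xb yb γ fun i => le_trans ?_ hγ
    have hp0 : 0 < p := by linarith
    have hnn : ∀ j, 0 ≤ pcost xa ya xb yb γ j := fun j => (abs_nonneg _).trans (le_max_left _ _)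
    have h1 : pcost xa ya xb yb γ i ^ p ≤ ∑ j, pcost xa ya xb yb γ j ^ p :=
      Finset.single_le_sum (f := fun j => pcost xa ya xb yb γ j ^ p)
        (fun j _ => Real.rpow_nonneg (hnn j) p) (Finset.mem_univ i)
    have h2 := Real.rpow_le_rpow (Real.rpow_nonneg (hnn i) p) h1 (one_div_pos.2 hp0).le
    rwa [← Real.rpow_mul (hnn i), mul_one_div_cancel hp0.ne', Real.rpow_one] at h2
  · intro xa ya _ hLa ε hε
    obtain ⟨δ, hδ, h⟩ := pent_core xa ya (hLmin.trans_le hLa) ε hε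
    refine ⟨δ, hδ, fun xb yb _ _ hd => ?_⟩
    obtain ⟨γ, -, hγ⟩ := (Finset.inf'_le_iff _).1 hd
    exact h xb yb γ fun i =>
      (le_ciSup (Set.finite_range (fun i => pcost xa ya xb yb γ i)).bddAbove i).trans hγ
end

section
/- Let P = (p_1, …, p_n) and Q = (q_1, …, q_n) be two finite probability distributions (p_i, q_i ≥ 0 and Σ p_i = Σ q_i = 1), with Shannon entropies E_S(P) = −Σ_i p_i log p_i and E_S(Q) = −Σ_i q_i log q_i. If ‖P − Q‖₁ = Σ_i |p_i − q_i| ≤ 1/2, then |E_S(P) − E_S(Q)| ≤ ‖P − Q‖₁ · log n − ‖P − Q‖₁ · log ‖P − Q‖₁. -/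
open Finset

/-- Shannon entropy `E_S(P) = −Σ_i p_i log p_i` of a finite probability distribution
(note `Real.log 0 = 0`, which realizes the convention `0·log 0 = 0`). -/
noncomputable def shannonEntropy {n : ℕ} (P : Fin n → ℝ) : ℝ :=
  -∑ i, P i * Real.log (P i)

lemma aux_half {d : ℝ} (h0 : 0 ≤ d) (h1 : d ≤ 1 / 2) :
    Real.negMulLog (1 - d) ≤ Real.negMulLog d := by
  rcases h0.eq_or_lt with rfl | hd
  · simp
  have hb : 0 < 1 - d := by linarith
  have hl0 : 0 ≤ d / (1 - d) := by positivity
  have hl1 : 0 ≤ 1 - d / (1 - d) := by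
    rw [sub_nonneg, div_le_one hb]; linarith
  have key := strictConcaveOn_log_Ioi.concaveOn.2 (x := d) (y := 1) hd (Set.mem_Ioi.2 one_pos)
    hl0 hl1 (by ring)
  have e : (d / (1 - d)) • d + (1 - d / (1 - d)) • (1 : ℝ) = 1 - d := by
    simp only [smul_eq_mul]
    field_simp
    ring
  rw [e] at key
  simp only [smul_eq_mul, Real.log_one, mul_zero, add_zero] at key
  have := mul_le_mul_of_nonneg_left key hb.le
  have e2 : (1 - d) * (d / (1 - d) * Real.log d) = d * Real.log d := by
    field_simp
  rw [e2] at this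
  simp only [Real.negMulLog]
  linarith

lemma aux_sub {x d : ℝ} (hx : 0 ≤ x) (hd : 0 ≤ d) :
    Real.negMulLog (x + d) ≤ Real.negMulLog x + Real.negMulLog d := by
  rcases hx.eq_or_lt with rfl | hx
  · simp
  rcases hd.eq_or_lt with rfl | hd
  · simp
  have h1 := mul_le_mul_of_nonneg_left
    (Real.log_le_log hx (by linarith : x ≤ x + d)) hx.le
  have h2 := mul_le_mul_of_nonneg_left
    (Real.log_le_log hd (by linarith : d ≤ x + d)) hd.le
  simp only [Real.negMulLog]
  linarith

lemma aux_four {x d : ℝ} (hx : 0 ≤ x) (hd : 0 ≤ d) (h1 : x + d ≤ 1) :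
    Real.negMulLog x ≤ Real.negMulLog (x + d) + Real.negMulLog (1 - d) := by
  rcases hd.eq_or_lt with rfl | hd
  · simp
  have hb : 0 < 1 - x := by linarith
  have hl0 : 0 ≤ d / (1 - x) := by positivity
  have hl1 : 0 ≤ 1 - d / (1 - x) := by
    rw [sub_nonneg, div_le_one hb]; linarith
  have k1 := Real.concaveOn_negMulLog.2 (x := x) (y := 1) hx (Set.mem_Ici.2 zero_le_one)
    hl0 hl1 (by ring)
  have k2 := Real.concaveOn_negMulLog.2 (x := x) (y := 1) hx (Set.mem_Ici.2 zero_le_one)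
    hl1 hl0 (by ring)
  have e1 : (d / (1 - x)) • x + (1 - d / (1 - x)) • (1 : ℝ) = 1 - d := by
    simp only [smul_eq_mul]
    field_simp
    ring
  have e2 : (1 - d / (1 - x)) • x + (d / (1 - x)) • (1 : ℝ) = x + d := by
    simp only [smul_eq_mul]
    field_simp
    ring
  rw [e1] at k1
  rw [e2] at k2
  simp only [smul_eq_mul, Real.negMulLog_one, mul_zero, add_zero] at k1 k2
  linarith

lemma aux_le {x y : ℝ} (hx : 0 ≤ x) (hxy : x ≤ y) (hy : y ≤ 1) (h : y - x ≤ 1 / 2) :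
    |Real.negMulLog x - Real.negMulLog y| ≤ Real.negMulLog (y - x) := by
  have hd : 0 ≤ y - x := by linarith
  have a := aux_half hd h
  have b := aux_sub hx hd
  have c := aux_four hx hd (by linarith)
  rw [add_sub_cancel] at b c
  rw [abs_le]
  constructor <;> linarith

lemma aux_abs {x y : ℝ} (hx : 0 ≤ x) (hy : 0 ≤ y) (hx1 : x ≤ 1) (hy1 : y ≤ 1)
    (h : |x - y| ≤ 1 / 2) :
    |Real.negMulLog x - Real.negMulLog y| ≤ Real.negMulLog |x - y| := by
  rcases le_total x y with hxy | hxy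
  · rw [abs_sub_comm x y, abs_of_nonneg (sub_nonneg.2 hxy)] at *
    exact aux_le hx hxy hy1 h
  · rw [abs_of_nonneg (sub_nonneg.2 hxy)] at *
    rw [abs_sub_comm]
    exact aux_le hy hxy hx1 h

lemma aux_jensen {n : ℕ} (d : Fin n → ℝ) (hd : ∀ i, 0 ≤ d i) :
    ∑ i, Real.negMulLog (d i) ≤
      (∑ i, d i) * Real.log n - (∑ i, d i) * Real.log (∑ i, d i) := by
  rcases Nat.eq_zero_or_pos n with rfl | hn
  · simp
  have hn' : (0 : ℝ) < n := by exact_mod_cast hn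
  have key := Real.concaveOn_negMulLog.le_map_sum (t := Finset.univ) (w := fun _ => (n : ℝ)⁻¹)
    (p := d) (fun _ _ => by positivity) (by simp [hn'.ne']) (fun i _ => hd i)
  simp only [smul_eq_mul, ← Finset.mul_sum] at key
  rw [Real.negMulLog_mul] at key
  have := mul_le_mul_of_nonneg_left key hn'.le
  rw [mul_inv_cancel_left₀ hn'.ne', mul_add, mul_inv_cancel_left₀ hn'.ne'] at this
  refine this.trans (le_of_eq ?_)
  simp only [Real.negMulLog, Real.log_inv]
  field_simp
  ring

/-- if `P`, `Q` are finite probability distributions on `n` points with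
`‖P − Q‖₁ ≤ 1/2`, then `|E_S(P) − E_S(Q)| ≤ ‖P−Q‖₁·log n − ‖P−Q‖₁·log ‖P−Q‖₁`
(when `‖P − Q‖₁ = 0` the right-hand side is `0`, as `Real.log 0 = 0`). -/
theorem shannonEntropy_stability {n : ℕ} (P Q : Fin n → ℝ)
    (hP : ∀ i, 0 ≤ P i) (hQ : ∀ i, 0 ≤ Q i)
    (hPsum : ∑ i, P i = 1) (hQsum : ∑ i, Q i = 1)
    (h : ∑ i, |P i - Q i| ≤ 1 / 2) :
    |shannonEntropy P - shannonEntropy Q| ≤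
      (∑ i, |P i - Q i|) * Real.log n - (∑ i, |P i - Q i|) * Real.log (∑ i, |P i - Q i|) := by
  have e : shannonEntropy P - shannonEntropy Q
      = ∑ i, (Real.negMulLog (P i) - Real.negMulLog (Q i)) := by
    simp [shannonEntropy, Real.negMulLog, Finset.sum_add_distrib]
  rw [e]
  refine (Finset.abs_sum_le_sum_abs _ _).trans
    (le_trans (Finset.sum_le_sum fun i _ => ?_) (aux_jensen _ fun i => abs_nonneg _))
  refine aux_abs (hP i) (hQ i) ?_ ?_ ?_
  · rw [← hPsum]
    exact Finset.single_le_sum (fun j _ => hP j) (Finset.mem_univ i)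
  · rw [← hQsum]
    exact Finset.single_le_sum (fun j _ => hQ j) (Finset.mem_univ i)
  · exact (Finset.single_le_sum (f := fun j => |P j - Q j|)
      (fun j _ => abs_nonneg _) (Finset.mem_univ i)).trans h
end

section
/- (Stability of the ES-function.) Let A and B be two finite persistence barcodes with positive total lengths. If the relative error r_∞(A, B) = 2 n_max d_∞(A,B) / L_max is at most 1/4, then ‖S(A) − S(B)‖₁ ≤ −2 L_min · r_∞(A,B) · log( 2 r_∞(A,B) ) + 2 d_∞(A,B) · log(n_max), and consequently ‖S(A) − S(B)‖₁ ≤ 2 r_∞(A,B) · ( −L_min · log( 2 r_∞(A,B) ) + L_max · log(n_max) / n_max ). -/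
open Finset

open MeasureTheory

/-- Entropy summary function (ES-function):
`S(A)(t) = −Σ_i w_i(t)·(ℓ_i/L)·log(ℓ_i/L)` with `w_i(t) = 1` iff `x_i ≤ t ≤ y_i`. -/
noncomputable def ES {n : ℕ} (x y : Fin n → ℝ) (t : ℝ) : ℝ :=
  -∑ i, (if x i ≤ t ∧ t ≤ y i then
    ((y i - x i) / lenSum x y) * Real.log ((y i - x i) / lenSum x y) else 0)

open Real in
theorem h_mono {x y : ℝ} (hx : 0 ≤ x) (hxy : x ≤ y) (hy : y ≤ exp (-1)) :
    negMulLog x ≤ negMulLog y := by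
  rcases hx.eq_or_lt with rfl | hx
  · rw [negMulLog_zero]
    exact negMulLog_nonneg hxy (hy.trans (exp_le_one_iff.2 (by norm_num)))
  have hy0 : 0 < y := hx.trans_le hxy
  have h1 : log y ≤ -1 := by rwa [log_le_iff_le_exp hy0]
  have h2 : log (y / x) ≤ y / x - 1 := log_le_sub_one_of_pos (by positivity)
  rw [log_div hy0.ne' hx.ne'] at h2
  have h3 : x * (log y - log x) ≤ y - x := by
    have := mul_le_mul_of_nonneg_left h2 hx.le
    have e : x * (y / x - 1) = y - x := by field_simp
    linarith
  unfold negMulLog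
  nlinarith

open Real in
theorem h_anti {x y : ℝ} (hx : exp (-1) ≤ x) (hxy : x ≤ y) :
    negMulLog y ≤ negMulLog x := by
  have hx0 : 0 < x := (exp_pos _).trans_le hx
  have hy0 : 0 < y := hx0.trans_le hxy
  have h1 : -1 ≤ log x := by rwa [le_log_iff_exp_le hx0]
  have h2 : log (x / y) ≤ x / y - 1 := log_le_sub_one_of_pos (by positivity)
  rw [log_div hx0.ne' hy0.ne'] at h2
  have h3 : y * (log x - log y) ≤ x - y := by
    have := mul_le_mul_of_nonneg_left h2 hy0.le
    have e : y * (x / y - 1) = x - y := by field_simp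
    linarith
  unfold negMulLog
  nlinarith

open Real in
theorem h_refl {d : ℝ} (hd : 0 ≤ d) (hd2 : d ≤ 1 / 2) :
    negMulLog (1 - d) ≤ negMulLog d := by
  rcases hd.eq_or_lt with rfl | hd
  · simp
  have h1 : 0 < 1 - d := by linarith
  have t0 : 0 ≤ d / (1 - d) := by positivity
  have t1 : 0 ≤ 1 - d / (1 - d) := by rw [sub_nonneg, div_le_one h1]; linarith
  have h := (strictConcaveOn_log_Ioi.concaveOn).2 (x := d) (y := 1) hd (by simp)
    t0 t1 (by ring)
  have e : (d / (1 - d)) * d + (1 - d / (1 - d)) * 1 = 1 - d := by field_simp; ring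
  simp only [smul_eq_mul, log_one, mul_zero, add_zero] at h
  rw [e] at h
  have := mul_le_mul_of_nonneg_left h h1.le
  have e2 : (1 - d) * (d / (1 - d) * log d) = d * log d := by field_simp
  unfold negMulLog
  linarith

open Real in
theorem h_sub {p d : ℝ} (hp : 0 ≤ p) (hd : 0 ≤ d) (hd2 : d ≤ 1 / 2) (h1 : p + d ≤ 1) :
    |negMulLog (p + d) - negMulLog p| ≤ negMulLog d := by
  rcases hd.eq_or_lt with rfl | hd
  · simp
  rw [abs_le]
  constructor
  · have hp1 : 0 < 1 - p := by linarith
    have t0 : 0 ≤ d / (1 - p) := by positivity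
    have t1 : 0 ≤ 1 - d / (1 - p) := by rw [sub_nonneg, div_le_one hp1]; linarith
    have c1 := concaveOn_negMulLog.2 (x := p) (y := 1) hp (by simp) t1 t0 (by ring)
    have c2 := concaveOn_negMulLog.2 (x := p) (y := 1) hp (by simp) t0 t1 (by ring)
    have e1 : (1 - d / (1 - p)) * p + d / (1 - p) * 1 = p + d := by field_simp; ring
    have e2 : d / (1 - p) * p + (1 - d / (1 - p)) * 1 = 1 - d := by field_simp; ring
    simp only [smul_eq_mul, negMulLog_one, mul_zero, add_zero] at c1 c2
    simp only [mul_one] at c1 c2 e1 e2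
    rw [e1] at c1
    rw [e2] at c2
    have := h_refl hd.le hd2
    linarith
  · rcases hp.eq_or_lt with rfl | hp
    · simp
    have l1 : log p ≤ log (p + d) := log_le_log hp (by linarith)
    have l2 : log d ≤ log (p + d) := log_le_log hd (by linarith)
    unfold negMulLog
    nlinarith

open Real in
theorem h_diff {p q : ℝ} (hp : 0 ≤ p) (hq : 0 ≤ q) (hp1 : p ≤ 1) (hq1 : q ≤ 1)
    (hd2 : |p - q| ≤ 1 / 2) :
    |negMulLog p - negMulLog q| ≤ negMulLog |p - q| := by
  rcases le_total p q with h | h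
  · rw [abs_sub_comm p q, abs_of_nonneg (sub_nonneg.2 h)] at *
    have := h_sub hp (sub_nonneg.2 h) hd2 (by linarith)
    rw [add_sub_cancel, abs_sub_comm] at this
    exact this
  · rw [abs_of_nonneg (sub_nonneg.2 h)] at *
    have := h_sub hq (sub_nonneg.2 h) hd2 (by linarith)
    rwa [add_sub_cancel] at this

open Real in
theorem h_key {p q r m : ℝ} (hp : 0 ≤ p) (hq : 0 ≤ q) (hp1 : p ≤ 1) (hq1 : q ≤ 1)
    (hr : 0 ≤ r) (hr4 : r ≤ 1 / 4) (hm : 2 ≤ m) (h : |p - q| ≤ r * (1 / m + q)) :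
    |negMulLog p - negMulLog q| ≤ negMulLog (2 * r) := by
  have e1 : exp (-1) < 0.3678794412 := exp_neg_one_lt_d9
  have e2 : 0.36787944116 < exp (-1) := exp_neg_one_gt_d9
  have hm' : 1 / m ≤ 1 / 2 := one_div_le_one_div_of_le (by norm_num) hm
  have h2 : |p - q| ≤ r * (1 / 2 + q) := h.trans (by gcongr)
  have h3 : |p - q| ≤ 1 / 4 * (1 / 2 + q) := h2.trans (by gcongr)
  rcases le_total (2 * r) (exp (-1)) with hc | hc
  · refine (h_diff hp hq hp1 hq1 (by linarith)).trans (h_mono (abs_nonneg _) ?_ hc)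
    nlinarith
  · refine le_trans ?_ (h_anti hc (show 2 * r ≤ 1 / 2 by linarith))
    have l2 := log_two_gt_d9
    have hh : negMulLog (1 / 2) = log 2 / 2 := by
      rw [negMulLog, one_div, log_inv]; ring
    by_cases h4 : |p - q| ≤ 1 / 4
    · refine (h_diff hp hq hp1 hq1 (by linarith)).trans ?_
      refine (h_mono (abs_nonneg _) h4 (by linarith)).trans ?_
      rw [hh, negMulLog, one_div, log_inv, show (4:ℝ) = 2 ^ 2 by norm_num, log_pow]
      push_cast
      linarith
    · have hq2 : 1 / 2 ≤ q := by linarith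
      have a1 := h_anti (show exp (-1) ≤ 1 / 2 by linarith) hq2
      have n1 := negMulLog_nonneg hp hp1
      have n2 := negMulLog_nonneg hq hq1
      rcases le_total (1 / 2) p with hp2 | hp2
      · have a2 := h_anti (show exp (-1) ≤ 1 / 2 by linarith) hp2
        rw [abs_le]; constructor <;> linarith
      · have hmax : negMulLog p ≤ exp (-1) := by
          have he : negMulLog (exp (-1)) = exp (-1) := by simp [negMulLog]
          rw [← he]
          rcases le_total p (exp (-1)) with h' | h'
          · exact h_mono hp h' le_rfl
          · exact h_anti le_rfl h'
        have h5 := (abs_le.1 h3).1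
        have hq3 : q ≤ 5 / 6 := by linarith
        have h6 : log q ≤ q - 1 := log_le_sub_one_of_pos (by linarith)
        have h7 : 1 / 12 ≤ negMulLog q := by
          unfold negMulLog; nlinarith
        rw [abs_le]; constructor <;> linarith

open Real in
theorem h_ent {p m : ℝ} (hp : 0 ≤ p) (hm : 0 < m) :
    negMulLog p ≤ p * log m + 1 / m - p := by
  rcases hp.eq_or_lt with rfl | hp
  · simp [hm.le]
  have h := log_le_sub_one_of_pos (show 0 < 1 / (m * p) by positivity)
  rw [one_div, log_inv, log_mul hm.ne' hp.ne'] at h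
  have := mul_le_mul_of_nonneg_left h hp.le
  have e : p * ((m * p)⁻¹ - 1) = 1 / m - p := by field_simp
  unfold negMulLog
  linarith

theorem ES_eq {n : ℕ} (x y : Fin n → ℝ) (t : ℝ) :
    ES x y t = ∑ i, Real.negMulLog ((y i - x i) / lenSum x y) *
      (Set.Icc (x i) (y i)).indicator (fun _ => (1:ℝ)) t := by
  unfold ES
  rw [← Finset.sum_neg_distrib]
  refine Finset.sum_congr rfl fun i _ => ?_
  by_cases h : x i ≤ t ∧ t ≤ y i
  · rw [if_pos h, Set.indicator_of_mem (Set.mem_Icc.2 h)]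
    simp [Real.negMulLog]
  · rw [if_neg h, Set.indicator_of_notMem (by rwa [Set.mem_Icc])]
    simp

theorem ind_diff (a b c d t : ℝ) :
    |(Set.Icc a b).indicator (fun _ => (1:ℝ)) t - (Set.Icc c d).indicator (fun _ => (1:ℝ)) t| ≤
      (Set.uIcc a c).indicator (fun _ => (1:ℝ)) t + (Set.uIcc b d).indicator (fun _ => (1:ℝ)) t := by
  classical
  simp only [Set.indicator_apply, Set.mem_Icc, Set.mem_uIcc]
  split_ifs <;> first | (norm_num; done) | (exfalso; grind)

theorem core {n : ℕ} (xa ya xb yb : Fin n → ℝ)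
    (hA : ∀ i, xa i ≤ ya i) (hB : ∀ i, xb i ≤ yb i)
    (hLa : 0 < lenSum xa ya) (hLb : 0 < lenSum xb yb) (hn : 0 < n)
    (hL : lenSum xb yb ≤ lenSum xa ya) (d r : ℝ)
    (hx : ∀ i, |xa i - xb i| ≤ d) (hy : ∀ i, |ya i - yb i| ≤ d)
    (hr : r = 2 * (n : ℝ) * d / lenSum xa ya) (hr4 : r ≤ 1 / 4) :
    (∫ t : ℝ, |ES xa ya t - ES xb yb t|) ≤
      lenSum xb yb * Real.negMulLog (2 * r) + 2 * d * Real.log n := by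
  have hn' : (0:ℝ) < n := by exact_mod_cast hn
  have hd : 0 ≤ d := (abs_nonneg _).trans (hx ⟨0, hn⟩)
  set La := lenSum xa ya with hLa'
  set Lb := lenSum xb yb with hLb'
  have hr0 : 0 ≤ r := by rw [hr]; positivity
  set p : Fin n → ℝ := fun i => (ya i - xa i) / La with hp
  set q : Fin n → ℝ := fun i => (yb i - xb i) / Lb with hq
  have hp0 : ∀ i, 0 ≤ p i := fun i => div_nonneg (sub_nonneg.2 (hA i)) hLa.le
  have hq0 : ∀ i, 0 ≤ q i := fun i => div_nonneg (sub_nonneg.2 (hB i)) hLb.le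
  have hps : ∑ i, p i = 1 := by
    simp only [hp]
    rw [← Finset.sum_div]; exact div_self hLa.ne'
  have hqs : ∑ i, q i = 1 := by
    simp only [hq]
    rw [← Finset.sum_div]; exact div_self hLb.ne'
  have hp1 : ∀ i, p i ≤ 1 := fun i => by
    rw [← hps]; exact Finset.single_le_sum (fun j _ => hp0 j) (Finset.mem_univ i)
  have hq1 : ∀ i, q i ≤ 1 := fun i => by
    rw [← hqs]; exact Finset.single_le_sum (fun j _ => hq0 j) (Finset.mem_univ i)
  have hl : ∀ i, |(ya i - xa i) - (yb i - xb i)| ≤ 2 * d := fun i => by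
    have h1 := abs_le.1 (hx i)
    have h2 := abs_le.1 (hy i)
    rw [abs_le]; constructor <;> linarith [h1.1, h1.2, h2.1, h2.2]
  have hLL : |Lb - La| ≤ 2 * n * d := by
    rw [abs_sub_comm, hLa', hLb']
    unfold lenSum
    rw [← Finset.sum_sub_distrib]
    refine (Finset.abs_sum_le_sum_abs _ _).trans ((Finset.sum_le_sum fun i _ => hl i).trans ?_)
    simp only [Finset.sum_const, Finset.card_univ, Fintype.card_fin, nsmul_eq_mul]
    linarith
  have hpq : ∀ i, |p i - q i| ≤ r * (1 / n + q i) := fun i => by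
    have e : p i - q i = ((ya i - xa i) - (yb i - xb i)) / La + q i * ((Lb - La) / La) := by
      simp only [hp, hq]; field_simp; ring
    have e2 : r * (1 / n + q i) = 2 * d / La + q i * (2 * n * d / La) := by
      rw [hr]; field_simp
    rw [e, e2]
    refine (abs_add_le _ _).trans (add_le_add ?_ ?_)
    · rw [abs_div, abs_of_pos hLa]
      exact div_le_div_of_nonneg_right (hl i) hLa.le
    · rw [abs_mul, abs_of_nonneg (hq0 i), abs_div, abs_of_pos hLa]
      exact mul_le_mul_of_nonneg_left (div_le_div_of_nonneg_right hLL hLa.le) (hq0 i)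
  set D := Real.negMulLog (2 * r) with hD
  have hD0 : 0 ≤ D := Real.negMulLog_nonneg (by linarith) (by linarith)
  have hkey : ∀ i, |Real.negMulLog (p i) - Real.negMulLog (q i)| ≤ D := fun i => by
    rcases Nat.lt_or_ge n 2 with h | h
    · obtain rfl : n = 1 := by omega
      have h1 : p i = 1 := by rw [← hps, Fin.sum_univ_one, Subsingleton.elim i 0]
      have h2 : q i = 1 := by rw [← hqs, Fin.sum_univ_one, Subsingleton.elim i 0]
      rw [h1, h2]; simpa using hD0
    · exact h_key (hp0 i) (hq0 i) (hp1 i) (hq1 i) hr0 hr4 (by exact_mod_cast h) (hpq i)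
  have hnp : ∀ i, 0 ≤ Real.negMulLog (p i) := fun i => Real.negMulLog_nonneg (hp0 i) (hp1 i)
  let I : Set ℝ → ℝ → ℝ := fun s => s.indicator (fun _ => (1:ℝ))
  have hIu : ∀ a b : ℝ, Integrable (I (Set.uIcc a b)) := fun a b =>
    (integrable_indicator_iff measurableSet_uIcc).2
      (integrableOn_const (by simp [Set.uIcc]) (by simp))
  have hIc : ∀ a b : ℝ, Integrable (I (Set.Icc a b)) := fun a b =>
    (integrable_indicator_iff measurableSet_Icc).2
      (integrableOn_const (by simp) (by simp))
  have hvu : ∀ a b : ℝ, ∫ t, I (Set.uIcc a b) t = |a - b| := fun a b => by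
    simp only [I]
    rw [integral_indicator measurableSet_uIcc]
    simp [measureReal_def, abs_sub_comm]
  have hvc : ∀ a b : ℝ, a ≤ b → ∫ t, I (Set.Icc a b) t = b - a := fun a b hab => by
    simp only [I]
    rw [integral_indicator measurableSet_Icc]
    simp [measureReal_def, hab]
  let g : Fin n → ℝ → ℝ := fun i t =>
    Real.negMulLog (p i) * (I (Set.uIcc (xa i) (xb i)) t + I (Set.uIcc (ya i) (yb i)) t) +
      D * I (Set.Icc (xb i) (yb i)) t
  have hgi : ∀ i, Integrable (g i) := fun i =>
    (((hIu _ _).add (hIu _ _)).const_mul _).add ((hIc _ _).const_mul _)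
  have hpt : ∀ t, |ES xa ya t - ES xb yb t| ≤ ∑ i, g i t := fun t => by
    rw [ES_eq, ES_eq, ← Finset.sum_sub_distrib]
    refine (Finset.abs_sum_le_sum_abs _ _).trans (Finset.sum_le_sum fun i _ => ?_)
    change |Real.negMulLog (p i) * I (Set.Icc (xa i) (ya i)) t -
      Real.negMulLog (q i) * I (Set.Icc (xb i) (yb i)) t| ≤ g i t
    have e : Real.negMulLog (p i) * I (Set.Icc (xa i) (ya i)) t -
      Real.negMulLog (q i) * I (Set.Icc (xb i) (yb i)) t =
      Real.negMulLog (p i) * (I (Set.Icc (xa i) (ya i)) t - I (Set.Icc (xb i) (yb i)) t) +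
      (Real.negMulLog (p i) - Real.negMulLog (q i)) * I (Set.Icc (xb i) (yb i)) t := by ring
    have hI0 : 0 ≤ I (Set.Icc (xb i) (yb i)) t := Set.indicator_nonneg (by simp) _
    rw [e]
    refine (abs_add_le _ _).trans (add_le_add ?_ ?_)
    · rw [abs_mul, abs_of_nonneg (hnp i)]
      exact mul_le_mul_of_nonneg_left (ind_diff _ _ _ _ _) (hnp i)
    · rw [abs_mul, abs_of_nonneg hI0]
      exact mul_le_mul_of_nonneg_right (hkey i) hI0
  have hgv : ∀ i, ∫ t, g i t = Real.negMulLog (p i) * (|xa i - xb i| + |ya i - yb i|) +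
      D * (yb i - xb i) := fun i => by
    simp only [g]
    have j1 : Integrable (fun t => Real.negMulLog (p i) *
        (I (Set.uIcc (xa i) (xb i)) t + I (Set.uIcc (ya i) (yb i)) t)) :=
      ((hIu _ _).add (hIu _ _)).const_mul _
    rw [integral_add j1 ((hIc _ _).const_mul _),
      integral_const_mul, integral_const_mul, integral_add (hIu _ _) (hIu _ _), hvu, hvu,
      hvc _ _ (hB i)]
  calc (∫ t : ℝ, |ES xa ya t - ES xb yb t|) ≤ ∫ t, ∑ i, g i t :=
        integral_mono_of_nonneg (Filter.Eventually.of_forall fun t => abs_nonneg _)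
          (integrable_finsetSum _ fun i _ => hgi i) (Filter.Eventually.of_forall hpt)
    _ = ∑ i, (Real.negMulLog (p i) * (|xa i - xb i| + |ya i - yb i|) + D * (yb i - xb i)) := by
        rw [integral_finsetSum _ fun i _ => hgi i]
        exact Finset.sum_congr rfl fun i _ => hgv i
    _ ≤ ∑ i, ((p i * Real.log n + 1 / n - p i) * (2 * d) + D * (yb i - xb i)) := by
        refine Finset.sum_le_sum fun i _ => add_le_add ?_ le_rfl
        refine (mul_le_mul_of_nonneg_left (b := |xa i - xb i| + |ya i - yb i|) (c := 2 * d)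
          (by linarith [hx i, hy i]) (hnp i)).trans ?_
        exact mul_le_mul_of_nonneg_right (h_ent (hp0 i) hn') (by linarith)
    _ = Lb * D + 2 * d * Real.log n := by
        rw [Finset.sum_add_distrib, ← Finset.sum_mul, ← Finset.mul_sum,
          Finset.sum_sub_distrib, Finset.sum_add_distrib, ← Finset.sum_mul, hps]
        simp only [Finset.sum_const, Finset.card_univ, Fintype.card_fin, nsmul_eq_mul]
        rw [mul_one_div_cancel hn'.ne', hLb', lenSum]
        ring

/-- Stability of the ES-function: if the relative error
`r_∞(A,B) = 2·n_max·d_∞(A,B)/L_max` is at most `1/4` then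
`‖S(A) − S(B)‖₁ ≤ −2·L_min·r_∞·log(2r_∞) + 2·d_∞(A,B)·log(n_max)` and consequently
`‖S(A) − S(B)‖₁ ≤ 2·r_∞·(−L_min·log(2r_∞) + L_max·log(n_max)/n_max)`.
(When `r_∞ = 0`, `Real.log 0 = 0` realizes the convention that the log terms vanish.) -/
theorem ES_stability {n : ℕ} (xa ya xb yb : Fin n → ℝ)
    (hA : ∀ i, xa i ≤ ya i) (hB : ∀ i, xb i ≤ yb i)
    (hLa : 0 < lenSum xa ya) (hLb : 0 < lenSum xb yb)
    (r : ℝ) (hr : r = 2 * (n : ℝ) * dInf xa ya xb yb / max (lenSum xa ya) (lenSum xb yb))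
    (hr4 : r ≤ 1 / 4) :
    (∫ t : ℝ, |ES xa ya t - ES xb yb t|) ≤
      -(2 * min (lenSum xa ya) (lenSum xb yb) * r * Real.log (2 * r)) +
        2 * dInf xa ya xb yb * Real.log n ∧
    (∫ t : ℝ, |ES xa ya t - ES xb yb t|) ≤
      2 * r * (-(min (lenSum xa ya) (lenSum xb yb) * Real.log (2 * r)) +
        max (lenSum xa ya) (lenSum xb yb) * Real.log n / n) := by
  have hn : 0 < n := by
    rcases Nat.eq_zero_or_pos n with rfl | h
    · simp [lenSum] at hLa
    · exact h
  have hn' : (0:ℝ) < n := by exact_mod_cast hn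
  obtain ⟨γ, -, hγ⟩ := Finset.exists_mem_eq_inf' (Finset.univ_nonempty)
    (fun γ : Equiv.Perm (Fin n) => ⨆ i, pcost xa ya xb yb γ i)
  change dInf xa ya xb yb = _ at hγ
  set d := dInf xa ya xb yb with hd
  have hc : ∀ i, pcost xa ya xb yb γ i ≤ d := fun i => by
    rw [hγ]; exact le_ciSup (Set.finite_range _).bddAbove i
  have hx : ∀ i, |xa i - xb (γ i)| ≤ d := fun i => (le_max_left _ _).trans (hc i)
  have hy : ∀ i, |ya i - yb (γ i)| ≤ d := fun i => (le_max_right _ _).trans (hc i)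
  have hd0 : 0 ≤ d := (abs_nonneg _).trans (hx ⟨0, hn⟩)
  have hlen : lenSum (xb ∘ γ) (yb ∘ γ) = lenSum xb yb :=
    Equiv.sum_comp γ (fun i => yb i - xb i)
  have hES : ∀ t, ES (xb ∘ γ) (yb ∘ γ) t = ES xb yb t := fun t => by
    rw [ES_eq, ES_eq, hlen]
    exact Equiv.sum_comp γ (fun i => Real.negMulLog ((yb i - xb i) / lenSum xb yb) *
      (Set.Icc (xb i) (yb i)).indicator (fun _ => (1:ℝ)) t)
  have main : (∫ t : ℝ, |ES xa ya t - ES xb yb t|) ≤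
      min (lenSum xa ya) (lenSum xb yb) * Real.negMulLog (2 * r) + 2 * d * Real.log n := by
    rcases le_total (lenSum xb yb) (lenSum xa ya) with h | h
    · rw [min_eq_right h]
      rw [max_eq_left h] at hr
      have := core xa ya (xb ∘ γ) (yb ∘ γ) hA (fun i => hB _) hLa (by rwa [hlen]) hn
        (by rwa [hlen]) d r hx hy hr hr4
      simpa only [hES, hlen] using this
    · rw [min_eq_left h]
      rw [max_eq_right h] at hr
      have := core (xb ∘ γ) (yb ∘ γ) xa ya (fun i => hB _) hA (by rwa [hlen]) hLa hn
        (by rwa [hlen]) d r (fun i => by rw [abs_sub_comm]; exact hx i)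
        (fun i => by rw [abs_sub_comm]; exact hy i) (by rwa [hlen]) hr4
      simp only [hES] at this
      simpa only [abs_sub_comm] using this
  have hM : 0 < max (lenSum xa ya) (lenSum xb yb) := lt_max_of_lt_left hLa
  have e1 : min (lenSum xa ya) (lenSum xb yb) * Real.negMulLog (2 * r) =
      -(2 * min (lenSum xa ya) (lenSum xb yb) * r * Real.log (2 * r)) := by
    unfold Real.negMulLog; ring
  rw [e1] at main
  refine ⟨main, main.trans ?_⟩
  have e2 : 2 * d * Real.log n =
      r * (max (lenSum xa ya) (lenSum xb yb) * Real.log n / n) := by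
    rw [hr]; field_simp
  have hr0 : 0 ≤ r := by rw [hr]; positivity
  have hl : 0 ≤ r * (max (lenSum xa ya) (lenSum xb yb) * Real.log n / n) := by
    have := Real.log_natCast_nonneg n
    positivity
  rw [e2]
  linarith
end
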